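/- Let n ≥ 1 and let 0 < s < n and 0 < t < n. There is a constant C = C(n, s, t) > 0 such that for all finite Borel measures μ and ν on ℝⁿ with compact support satisfying I_s(μ) < ∞ and I_t(ν) < ∞, the mutual energy satisfies I_{(s+t)/2}(μ, ν) = ∬ |x−y|^{−(s+t)/2} dμ(x) dν(y) ≤ C · ( I_s(μ) · I_t(ν) )^{1/2}; in particular this mutual energy is finite. -/

import Mathlib

open MeasureTheory Metric Set
open scoped ENNReal RealInnerProductSpace

/-- The topological support of a measure: points all of whose neighbourhoods
have positive measure. -/
def sptm (n : ℕ) (μ : MeasureTheory.Measure (EuclideanSpace ℝ (Fin n))) :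
    Set (EuclideanSpace ℝ (Fin n)) :=
  {x | ∀ r > 0, 0 < μ (Metric.ball x r)}

/-- The `s`-energy `I_s(μ) = ∬ |x-y|^{-s} dμ(x) dμ(y)` of a measure. -/
noncomputable def energyI (n : ℕ) (s : ℝ)
    (μ : MeasureTheory.Measure (EuclideanSpace ℝ (Fin n))) : ℝ≥0∞ :=
  ∫⁻ x, ∫⁻ y, (‖x - y‖₊ : ℝ≥0∞) ^ (-s) ∂μ ∂μ

/-- The mutual `u`-energy `I_u(μ, ν) = ∬ |x-y|^{-u} dμ(x) dν(y)` of two measures. -/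
noncomputable def mutualEnergyI (n : ℕ) (u : ℝ)
    (μ ν : MeasureTheory.Measure (EuclideanSpace ℝ (Fin n))) : ℝ≥0∞ :=
  ∫⁻ x, ∫⁻ y, (‖x - y‖₊ : ℝ≥0∞) ^ (-u) ∂ν ∂μ

/-- The Fourier transform `μ̂(ξ) = ∫ e^{-2πi⟨ξ,y⟩} dμ(y)` of a measure. -/
noncomputable def ftm (n : ℕ) (μ : MeasureTheory.Measure (EuclideanSpace ℝ (Fin n)))
    (ξ : EuclideanSpace ℝ (Fin n)) : ℂ :=
  ∫ y, Complex.exp ((-2 * Real.pi * ⟪ξ, y⟫ : ℝ) * Complex.I) ∂μ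

/-!
Write `F(r) = (μ × ν){|x - y| < r}`. Integrating over scales gives
`I_u(μ, ν) = u ∫₀^∞ r^(-u-1) F(r) dr`, so it is enough to bound `F` scale by scale. Up to constants
and a dilation of `r`, `r ^ dim * F(r)` is `∫ μ(B(z, r)) ν(B(z, r)) dz`, because `B(x, r) ∩ B(y, r)`
is empty unless `|x - y| < 2r`, and `B(y, 2r)` contains `B(x, r)` once `|x - y| < r`. Cauchy–Schwarz
in the centre `z` controls `F` by its analogues for `(μ, μ)` and `(ν, ν)`, and Cauchy–Schwarz in the
scale `r`, splitting the weight `r^(-(s+t)/2-1)` evenly, gives the inequality. This replaces the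
Fourier representation of the energies.
-/

theorem lintegral_Ioi_ofReal_rpow {u a : ℝ} (hu : 0 < u) (ha : 0 ≤ a) :
    ∫⁻ r in Ioi a, ENNReal.ofReal (r ^ (-u - 1)) =
      ENNReal.ofReal u⁻¹ * ENNReal.ofReal a ^ (-u) := by
  have nonneg : 0 ≤ᵐ[volume.restrict (Ioi a)] fun r => r ^ (-u - 1) := by
    filter_upwards [ae_restrict_mem measurableSet_Ioi] with r hr
    exact Real.rpow_nonneg (ha.trans (le_of_lt hr)) _
  rcases ha.eq_or_lt with rfl | ha
  · rw [ENNReal.ofReal_zero, ENNReal.zero_rpow_of_neg (neg_lt_zero.2 hu),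
      ENNReal.mul_top (ENNReal.ofReal_pos.2 (inv_pos.2 hu)).ne']
    by_contra h
    exact not_integrableOn_Ioi_rpow _ <| (lintegral_ofReal_ne_top_iff_integrable
      (by fun_prop) nonneg).1 h
  · rw [← ofReal_integral_eq_lintegral_ofReal (integrableOn_Ioi_rpow_of_lt (by linarith) ha)
        nonneg, integral_Ioi_rpow_of_lt (by linarith) ha, ENNReal.ofReal_rpow_of_pos ha,
      ← ENNReal.ofReal_mul (inv_nonneg.2 hu.le), sub_add_cancel, neg_div_neg_eq, div_eq_inv_mul]

theorem setLIntegral_Ioi_zero_indicator_lt_mul_rpow {u c a : ℝ} (hu : 0 < u) (hc : 0 < c)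
    (ha : 0 ≤ a) :
    ∫⁻ r in Ioi 0, {r | a < c * r}.indicator (fun r => ENNReal.ofReal (r ^ (-u - 1))) r =
      ENNReal.ofReal (c ^ u / u) * ENNReal.ofReal a ^ (-u) := by
  have threshold : {r | a < c * r} = Ioi (a / c) := ext fun r => (div_lt_iff₀' hc).symm
  have dilation : ENNReal.ofReal (a / c) ^ (-u) =
      ENNReal.ofReal (c ^ u) * ENNReal.ofReal a ^ (-u) := by
    rw [div_eq_inv_mul, ENNReal.ofReal_mul (inv_nonneg.2 hc.le),
      ENNReal.mul_rpow_of_ne_top ENNReal.ofReal_ne_top ENNReal.ofReal_ne_top,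
      ENNReal.ofReal_rpow_of_pos (inv_pos.2 hc), Real.inv_rpow hc.le, Real.rpow_neg hc.le, inv_inv]
  rw [threshold, setLIntegral_indicator measurableSet_Ioi, Ioi_inter_Ioi,
    sup_of_le_left (by positivity), lintegral_Ioi_ofReal_rpow hu (by positivity), dilation,
    ← mul_assoc, ← ENNReal.ofReal_mul (inv_nonneg.2 hu.le), ← div_eq_inv_mul]

theorem setLIntegral_rpow_mul_le_rpow_half {F G H : ℝ → ℝ≥0∞} {K : ℝ≥0∞} (hF : Measurable F)
    (hG : Measurable G) (hK : K ≠ ∞) (h : ∀ r > 0, H r ≤ K * (F r * G r) ^ (1 / 2 : ℝ))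
    (s t : ℝ) :
    ∫⁻ r in Ioi 0, ENNReal.ofReal (r ^ (-((s + t) / 2) - 1)) * H r ≤
      K * ((∫⁻ r in Ioi 0, ENNReal.ofReal (r ^ (-s - 1)) * F r) *
        ∫⁻ r in Ioi 0, ENNReal.ofReal (r ^ (-t - 1)) * G r) ^ (1 / 2 : ℝ) := by
  have weight {r : ℝ} (hr : 0 < r) : ENNReal.ofReal (r ^ (-((s + t) / 2) - 1)) =
      (ENNReal.ofReal (r ^ (-s - 1)) * ENNReal.ofReal (r ^ (-t - 1))) ^ (1 / 2 : ℝ) := by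
    rw [← ENNReal.ofReal_mul (by positivity), ← Real.rpow_add hr,
      ENNReal.ofReal_rpow_of_pos (by positivity), ← Real.rpow_mul hr.le]
    ring_nf
  calc ∫⁻ r in Ioi 0, ENNReal.ofReal (r ^ (-((s + t) / 2) - 1)) * H r
      ≤ ∫⁻ r in Ioi 0, K * ((ENNReal.ofReal (r ^ (-s - 1)) * F r) ^ (1 / 2 : ℝ) *
          (ENNReal.ofReal (r ^ (-t - 1)) * G r) ^ (1 / 2 : ℝ)) := by
        refine setLIntegral_mono' measurableSet_Ioi fun r (hr : 0 < r) => ?_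
        rw [weight hr, ← ENNReal.mul_rpow_of_nonneg _ _ (by norm_num), mul_mul_mul_comm,
          ENNReal.mul_rpow_of_nonneg (_ * _) (F r * G r) (by norm_num), mul_left_comm]
        exact mul_le_mul_right (h r hr) _
    _ ≤ _ := by
        rw [lintegral_const_mul' _ _ hK, ENNReal.mul_rpow_of_nonneg _ _ (by norm_num)]
        gcongr
        exact ENNReal.lintegral_mul_norm_pow_le (by fun_prop) (by fun_prop) (by norm_num)
          (by norm_num) (by norm_num)

section Metric

variable {X : Type*} [PseudoMetricSpace X] [MeasurableSpace X]

/-- The mutual Riesz energy `I_u(μ, ν)`, written as an integral against the product measure.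
Pairs at distance zero contribute `0 ^ (-u) = ∞` when `0 < u`. -/
noncomputable def rieszEnergy (u : ℝ) (μ ν : Measure X) : ℝ≥0∞ :=
  ∫⁻ p, edist p.1 p.2 ^ (-u) ∂μ.prod ν

/-- The correlation integral of `μ` and `ν` at scale `r`: the `μ × ν`-mass of the pairs of points
at distance less than `r`. It plays the role of the distribution function of the distance. -/
noncomputable def correlationIntegral (μ ν : Measure X) (r : ℝ) : ℝ≥0∞ :=
  μ.prod ν {p | dist p.1 p.2 < r}

theorem monotone_correlationIntegral (μ ν : Measure X) : Monotone (correlationIntegral μ ν) :=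
  fun _ _ hr => measure_mono fun _ hp => lt_of_lt_of_le hp hr

variable [OpensMeasurableSpace X] [SecondCountableTopology X]

theorem measurableSet_dist_lt (r : ℝ) : MeasurableSet {p : X × X | dist p.1 p.2 < r} :=
  measurableSet_lt measurable_dist measurable_const

variable (μ ν : Measure X) [SFinite μ] [SFinite ν]

theorem lintegral_rpow_mul_correlationIntegral {u c : ℝ} (hu : 0 < u) (hc : 0 < c) :
    ∫⁻ r in Ioi 0, ENNReal.ofReal (r ^ (-u - 1)) * correlationIntegral μ ν (c * r) =
      ENNReal.ofReal (c ^ u / u) * rieszEnergy u μ ν := by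
  have measurable_scale : MeasurableSet {q : ℝ × X × X | dist q.2.1 q.2.2 < c * q.1} :=
    measurableSet_lt (by fun_prop) (by fun_prop)
  calc ∫⁻ r in Ioi 0, ENNReal.ofReal (r ^ (-u - 1)) * correlationIntegral μ ν (c * r)
      = ∫⁻ r in Ioi 0, (∫⁻ p, {p : X × X | dist p.1 p.2 < c * r}.indicator
          (fun _ => ENNReal.ofReal (r ^ (-u - 1))) p ∂μ.prod ν) :=
        lintegral_congr fun r =>
          (lintegral_indicator_const (measurableSet_dist_lt (c * r)) _).symm
    _ = ∫⁻ p, (∫⁻ r in Ioi 0, {r | dist p.1 p.2 < c * r}.indicator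
          (fun r => ENNReal.ofReal (r ^ (-u - 1))) r) ∂μ.prod ν :=
        lintegral_lintegral_swap (Measurable.indicator
          (f := fun q : ℝ × X × X => ENNReal.ofReal (q.1 ^ (-u - 1)))
          (by fun_prop) measurable_scale).aemeasurable
    _ = ENNReal.ofReal (c ^ u / u) * rieszEnergy u μ ν := by
        simp_rw [setLIntegral_Ioi_zero_indicator_lt_mul_rpow hu hc dist_nonneg, ← edist_dist]
        exact lintegral_const_mul' _ _ ENNReal.ofReal_ne_top

theorem rieszEnergy_le_of_correlationIntegral_le {s t c K : ℝ} (hs : 0 < s) (ht : 0 < t)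
    (hc : 0 < c)
    (h : ∀ r > 0, correlationIntegral μ ν r ≤ ENNReal.ofReal K *
      (correlationIntegral μ μ (c * r) * correlationIntegral ν ν (c * r)) ^ (1 / 2 : ℝ)) :
    rieszEnergy ((s + t) / 2) μ ν ≤
      ENNReal.ofReal ((s + t) / 2 * K * (c ^ s / s * (c ^ t / t)) ^ (1 / 2 : ℝ)) *
        (rieszEnergy s μ μ * rieszEnergy t ν ν) ^ (1 / 2 : ℝ) := by
  have hu : 0 < (s + t) / 2 := by positivity
  have measurable_dilated (κ : Measure X) :
      Measurable fun r => correlationIntegral κ κ (c * r) :=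
    (monotone_correlationIntegral κ κ).measurable.comp (measurable_const_mul c)
  have layer_cake : ENNReal.ofReal ((s + t) / 2)⁻¹ * rieszEnergy ((s + t) / 2) μ ν =
      ∫⁻ r in Ioi 0, ENNReal.ofReal (r ^ (-((s + t) / 2) - 1)) * correlationIntegral μ ν r := by
    simpa only [one_mul, Real.one_rpow, one_div] using
      (lintegral_rpow_mul_correlationIntegral μ ν hu one_pos).symm
  have cauchy_schwarz := setLIntegral_rpow_mul_le_rpow_half (measurable_dilated μ)
    (measurable_dilated ν) ENNReal.ofReal_ne_top h s t
  rw [← layer_cake, lintegral_rpow_mul_correlationIntegral μ μ hs hc,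
    lintegral_rpow_mul_correlationIntegral ν ν ht hc, mul_mul_mul_comm,
    ENNReal.mul_rpow_of_nonneg _ _ (by norm_num), ← ENNReal.ofReal_mul (by positivity),
    ENNReal.ofReal_rpow_of_pos (by positivity), ENNReal.ofReal_inv_of_pos hu,
    ENNReal.inv_mul_le_iff (ENNReal.ofReal_pos.2 hu).ne' ENNReal.ofReal_ne_top] at cauchy_schwarz
  rwa [mul_assoc ((s + t) / 2), ENNReal.ofReal_mul hu.le,
    ENNReal.ofReal_mul' (by positivity), mul_assoc, mul_assoc]

theorem lintegral_measure_ball_mul_measure_ball_le_rpow_half (m : Measure X) (r : ℝ) :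
    ∫⁻ z, μ (ball z r) * ν (ball z r) ∂m ≤
      ((∫⁻ z, μ (ball z r) * μ (ball z r) ∂m) *
        ∫⁻ z, ν (ball z r) * ν (ball z r) ∂m) ^ (1 / 2 : ℝ) := by
  have measurable_mass (κ : Measure X) [SFinite κ] : Measurable fun z => κ (ball z r) :=
    measurable_measure_prodMk_right (measurableSet_dist_lt r)
  rw [ENNReal.mul_rpow_of_nonneg _ _ (by norm_num)]
  simpa only [Pi.mul_apply, ENNReal.rpow_two, sq] using
    ENNReal.lintegral_mul_le_Lp_mul_Lq m Real.HolderConjugate.two_two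
      (measurable_mass μ).aemeasurable (measurable_mass ν).aemeasurable

variable (m : Measure X) [SFinite m]

theorem lintegral_measure_ball_mul_measure_ball (r : ℝ) :
    ∫⁻ z, μ (ball z r) * ν (ball z r) ∂m =
      ∫⁻ p, m (ball p.1 r ∩ ball p.2 r) ∂μ.prod ν := by
  let incidences : Set (X × X × X) := {q | dist q.2.1 q.1 < r} ∩ {q | dist q.2.2 q.1 < r}
  have measurable_incidences : MeasurableSet incidences :=
    (measurableSet_lt (by fun_prop) (by fun_prop)).inter
      (measurableSet_lt (by fun_prop) (by fun_prop))
  calc ∫⁻ z, μ (ball z r) * ν (ball z r) ∂m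
      = ∫⁻ z, μ.prod ν (Prod.mk z ⁻¹' incidences) ∂m :=
        lintegral_congr fun z => (Measure.prod_prod (ball z r) (ball z r)).symm
    _ = m.prod (μ.prod ν) incidences := (Measure.prod_apply measurable_incidences).symm
    _ = ∫⁻ p, m ((fun z => (z, p)) ⁻¹' incidences) ∂μ.prod ν :=
        Measure.prod_apply_symm measurable_incidences
    _ = ∫⁻ p, m (ball p.1 r ∩ ball p.2 r) ∂μ.prod ν := by
        refine lintegral_congr fun p => congrArg m (ext fun z => ?_)
        simp [incidences, dist_comm]

variable {m} {a b : ℝ≥0∞} {r : ℝ}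

theorem mul_correlationIntegral_le_lintegral_measure_ball (ha : ∀ x, a ≤ m (ball x r)) :
    a * correlationIntegral μ ν r ≤ ∫⁻ z, μ (ball z (2 * r)) * ν (ball z (2 * r)) ∂m := by
  rw [lintegral_measure_ball_mul_measure_ball, correlationIntegral, ← setLIntegral_const]
  refine (setLIntegral_mono' (measurableSet_dist_lt r)
    fun p (hp : dist p.1 p.2 < r) => ?_).trans (setLIntegral_le_lintegral _ _)
  have hr : 0 < r := dist_nonneg.trans_lt hp
  exact (ha p.1).trans <| measure_mono <|
    subset_inter (ball_subset_ball (by linarith)) (ball_subset_ball' (by linarith))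

theorem lintegral_measure_ball_le_mul_correlationIntegral (hb : ∀ x, m (ball x r) ≤ b) :
    ∫⁻ z, μ (ball z r) * ν (ball z r) ∂m ≤ b * correlationIntegral μ ν (2 * r) := by
  rw [lintegral_measure_ball_mul_measure_ball, correlationIntegral,
    ← lintegral_indicator_const (measurableSet_dist_lt (2 * r))]
  refine lintegral_mono fun p => ?_
  by_cases hp : p ∈ {p : X × X | dist p.1 p.2 < 2 * r}
  · rw [indicator_of_mem hp]
    exact (measure_mono inter_subset_left).trans (hb p.1)
  · have far : 2 * r ≤ dist p.1 p.2 := not_lt.1 hp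
    rw [(ball_disjoint_ball (by linarith)).inter_eq, measure_empty]
    exact zero_le

theorem mul_correlationIntegral_le_rpow_half (ha : ∀ x, a ≤ m (ball x r))
    (hb : ∀ x, m (ball x (2 * r)) ≤ b) :
    a * correlationIntegral μ ν r ≤
      b * (correlationIntegral μ μ (4 * r) * correlationIntegral ν ν (4 * r)) ^ (1 / 2 : ℝ) := by
  have four_mul_eq : 4 * r = 2 * (2 * r) := by ring
  calc a * correlationIntegral μ ν r
      ≤ ∫⁻ z, μ (ball z (2 * r)) * ν (ball z (2 * r)) ∂m :=
        mul_correlationIntegral_le_lintegral_measure_ball μ ν ha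
    _ ≤ ((∫⁻ z, μ (ball z (2 * r)) * μ (ball z (2 * r)) ∂m) *
          ∫⁻ z, ν (ball z (2 * r)) * ν (ball z (2 * r)) ∂m) ^ (1 / 2 : ℝ) :=
        lintegral_measure_ball_mul_measure_ball_le_rpow_half μ ν m (2 * r)
    _ ≤ (b * correlationIntegral μ μ (4 * r) *
          (b * correlationIntegral ν ν (4 * r))) ^ (1 / 2 : ℝ) := by
        rw [four_mul_eq]
        gcongr <;> exact lintegral_measure_ball_le_mul_correlationIntegral _ _ hb
    _ = b * (correlationIntegral μ μ (4 * r) * correlationIntegral ν ν (4 * r)) ^ (1 / 2 : ℝ) := by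
        rw [mul_mul_mul_comm, ENNReal.mul_rpow_of_nonneg _ _ (by norm_num), ← sq,
          ← ENNReal.rpow_two, ← ENNReal.rpow_mul, mul_one_div_cancel two_ne_zero,
          ENNReal.rpow_one]

end Metric

section NormedSpace

variable {E : Type*} [NormedAddCommGroup E] [NormedSpace ℝ E] [FiniteDimensional ℝ E]
  [MeasurableSpace E] [BorelSpace E]

theorem correlationIntegral_le_rpow_half (μ ν : Measure E) [SFinite μ] [SFinite ν] {r : ℝ}
    (hr : 0 < r) :
    correlationIntegral μ ν r ≤ ENNReal.ofReal (2 ^ Module.finrank ℝ E) *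
      (correlationIntegral μ μ (4 * r) * correlationIntegral ν ν (4 * r)) ^ (1 / 2 : ℝ) := by
  let m : Measure E := Measure.addHaar
  have volume_ne_zero : m (ball 0 r) ≠ 0 := (measure_ball_pos m 0 hr).ne'
  have volume_ne_top : m (ball 0 r) ≠ ∞ := measure_ball_lt_top.ne
  rw [← ENNReal.mul_le_mul_iff_right volume_ne_zero volume_ne_top, ← mul_assoc,
    mul_comm (m (ball 0 r)) (ENNReal.ofReal _)]
  exact mul_correlationIntegral_le_rpow_half μ ν
    (fun x => (Measure.addHaar_ball_center m x r).ge)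
    (fun x => (Measure.addHaar_ball_mul_of_pos m x two_pos r).le)

theorem stmt_17_general {s t : ℝ} (hs : 0 < s) (ht : 0 < t) :
    ∃ C : ℝ, 0 < C ∧ ∀ (μ ν : Measure E) [SFinite μ] [SFinite ν],
      rieszEnergy ((s + t) / 2) μ ν ≤
        ENNReal.ofReal C * (rieszEnergy s μ μ * rieszEnergy t ν ν) ^ (1 / 2 : ℝ) :=
  ⟨(s + t) / 2 * 2 ^ Module.finrank ℝ E * (4 ^ s / s * (4 ^ t / t)) ^ (1 / 2 : ℝ),
    by positivity, fun μ ν _ _ => rieszEnergy_le_of_correlationIntegral_le μ ν hs ht four_pos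
      fun _ hr => correlationIntegral_le_rpow_half μ ν hr⟩

end NormedSpace

theorem mutualEnergyI_eq_rieszEnergy {n : ℕ} (u : ℝ) (μ ν : Measure (EuclideanSpace ℝ (Fin n)))
    [SFinite μ] [SFinite ν] : mutualEnergyI n u μ ν = rieszEnergy u μ ν := by
  rw [rieszEnergy, lintegral_prod _ (by fun_prop)]
  simp only [mutualEnergyI, edist_eq_enorm_sub, enorm_eq_nnnorm]

theorem energyI_eq_rieszEnergy {n : ℕ} (s : ℝ) (μ : Measure (EuclideanSpace ℝ (Fin n)))
    [SFinite μ] : energyI n s μ = rieszEnergy s μ μ :=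
  mutualEnergyI_eq_rieszEnergy s μ μ

theorem stmt_17 (n : ℕ) (hn : 1 ≤ n) (s t : ℝ)
    (hs0 : 0 < s) (hsn : s < n) (ht0 : 0 < t) (htn : t < n) :
    ∃ C : ℝ, 0 < C ∧
      ∀ μ ν : Measure (EuclideanSpace ℝ (Fin n)),
        IsFiniteMeasure μ → IsFiniteMeasure ν →
        IsCompact (sptm n μ) → IsCompact (sptm n ν) →
        energyI n s μ < ∞ → energyI n t ν < ∞ →
        mutualEnergyI n ((s + t) / 2) μ ν ≤
            ENNReal.ofReal C * (energyI n s μ * energyI n t ν) ^ (1/2 : ℝ) ∧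
          mutualEnergyI n ((s + t) / 2) μ ν < ∞ := by
  obtain ⟨C, hC, bound⟩ := stmt_17_general (E := EuclideanSpace ℝ (Fin n)) hs0 ht0
  refine ⟨C, hC, fun μ ν _ _ _ _ hμ hν => ?_⟩
  rw [energyI_eq_rieszEnergy] at hμ hν
  rw [mutualEnergyI_eq_rieszEnergy, energyI_eq_rieszEnergy, energyI_eq_rieszEnergy]
  exact ⟨bound μ ν, (bound μ ν).trans_lt (by finiteness)⟩
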